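/- Let n₁ be a nonzero integer and let f(y) = (32π·σ₂(|n₁|)²/(315·|n₁|³)) · ∑_{i,j ∈ {0,1}} r^{ij}(π|n₁|y)·K_i(2π|n₁|y)·K_j(2π|n₁|y), where r⁰⁰(z) = z·(−512z⁴ + 48z² − 15), r⁰¹(z) = r¹⁰(z) = −(128z⁴ + 12z² + 15), and r¹¹(z) = (512z⁶ + 16z⁴ + 33z² − 15)/z. Then f(y) + 8·σ₂(|n₁|)²/(21·n₁⁶·π²·y³) − 8·σ₂(|n₁|)²/(5·n₁⁴·y) remains bounded as y → 0⁺. -/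

import Mathlib

open Real

/-- Modified Bessel function `K₀`. -/
noncomputable def K0 (x : ℝ) : ℝ := ∫ t in Set.Ioi (0 : ℝ), Real.exp (-x * Real.cosh t)

/-- Modified Bessel function `K₁`. -/
noncomputable def K1 (x : ℝ) : ℝ :=
  ∫ t in Set.Ioi (0 : ℝ), Real.exp (-x * Real.cosh t) * Real.cosh t

/-- Divisor sum `σ₂(m) = ∑_{d ∣ m} d²`. -/
def sigma2 (m : ℕ) : ℕ := ∑ d ∈ m.divisors, d ^ 2

/-- The coefficient `r⁰⁰`. -/
noncomputable def r00 (z : ℝ) : ℝ := z * (-512 * z ^ 4 + 48 * z ^ 2 - 15)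

/-- The coefficient `r⁰¹ = r¹⁰`. -/
noncomputable def r01 (z : ℝ) : ℝ := -(128 * z ^ 4 + 12 * z ^ 2 + 15)

/-- The coefficient `r¹¹`. -/
noncomputable def r11 (z : ℝ) : ℝ := (512 * z ^ 6 + 16 * z ^ 4 + 33 * z ^ 2 - 15) / z

/-- The particular solution `f̂^P_{n₁,-n₁}`. -/
noncomputable def fPdiag (n₁ : ℤ) (y : ℝ) : ℝ :=
  32 * π * (sigma2 n₁.natAbs : ℝ) ^ 2 / (315 * |(n₁ : ℝ)| ^ 3) *
    (r00 (π * |(n₁ : ℝ)| * y) * K0 (2 * π * |(n₁ : ℝ)| * y) * K0 (2 * π * |(n₁ : ℝ)| * y) +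
      r01 (π * |(n₁ : ℝ)| * y) * K0 (2 * π * |(n₁ : ℝ)| * y) * K1 (2 * π * |(n₁ : ℝ)| * y) +
      r01 (π * |(n₁ : ℝ)| * y) * K1 (2 * π * |(n₁ : ℝ)| * y) * K0 (2 * π * |(n₁ : ℝ)| * y) +
      r11 (π * |(n₁ : ℝ)| * y) * K1 (2 * π * |(n₁ : ℝ)| * y) * K1 (2 * π * |(n₁ : ℝ)| * y))

/-!
The small-`y` behaviour only needs two facts about Bessel functions as `x → 0⁺`: `√x K₀(x) → 0`, and
`K₁(x) = 1/x - (x/2) K₀(x) - x/4 + x² e(x)` with `e(x) → 0`. The second follows from the first and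
`x K₁(x) → 1` by two applications of L'Hôpital's rule, since `(x K₁)' = -x K₀` and `K₀' = -K₁`.
When the expansion of `K₁` is inserted in the quadratic form, the terms in `K₀ / z` cancel, the
polar part is `-15/(4z³) + 63/(4z)`, and what remains is a polynomial without constant term in `√z`,
`√z K₀` and `e`. So the expression does not merely stay bounded: it tends to `0`.
-/

open MeasureTheory ProbabilityTheory Filter Set
open scoped Topology

section BesselFunctions

variable {x : ℝ}

/-- The exponentially weighted moments of `cosh` on `(0, ∞)`, that is `(-1)ⁿ` times the `n`-th
derivative of `K₀`. They give a uniform treatment of `K₀`, `K₁` and their derivatives. -/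
noncomputable def coshMoment (n : ℕ) (x : ℝ) : ℝ :=
  ∫ t in Ioi (0 : ℝ), cosh t ^ n * exp (-x * cosh t)

lemma K0_eq_coshMoment : K0 = coshMoment 0 := by
  funext x; simp [K0, coshMoment]

lemma K1_eq_coshMoment : K1 = coshMoment 1 := by
  funext x; simp [K1, coshMoment, mul_comm]

lemma self_le_cosh (t : ℝ) : t ≤ cosh t := by
  rcases le_total t 0 with ht | ht
  · exact ht.trans (cosh_pos t).le
  · exact (self_le_sinh_iff.2 ht).trans (sinh_lt_cosh t).le

lemma integrableOn_exp_neg_mul_cosh (hx : 0 < x) :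
    IntegrableOn (fun t ↦ exp (-x * cosh t)) (Ioi 0) := by
  refine (exp_neg_integrableOn_Ioi 0 hx).mono' (by fun_prop) (ae_of_all _ fun t ↦ ?_)
  rw [norm_of_nonneg (exp_pos _).le, exp_le_exp]
  exact mul_le_mul_of_nonpos_left (self_le_cosh t) (neg_nonpos.2 hx.le)

lemma neg_mem_interior_integrableExpSet_cosh (hx : 0 < x) :
    -x ∈ interior (integrableExpSet cosh (volume.restrict (Ioi 0))) := by
  refine mem_interior.2 ⟨Iio 0, fun t ht ↦ ?_, isOpen_Iio, neg_lt_zero.2 hx⟩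
  simpa [integrableExpSet, IntegrableOn] using integrableOn_exp_neg_mul_cosh (neg_pos.2 ht)

lemma integrableOn_cosh_pow_mul_exp (n : ℕ) (hx : 0 < x) :
    IntegrableOn (fun t ↦ cosh t ^ n * exp (-x * cosh t)) (Ioi 0) :=
  integrable_pow_mul_exp_of_mem_interior_integrableExpSet
    (neg_mem_interior_integrableExpSet_cosh hx) n

lemma hasDerivAt_coshMoment (n : ℕ) (hx : 0 < x) :
    HasDerivAt (coshMoment n) (-coshMoment (n + 1) x) x := by
  have hmem := neg_mem_interior_integrableExpSet_cosh hx
  have h := (hasDerivAt_integral_pow_mul_exp_real hmem n).comp x (hasDerivAt_neg x)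
  rw [mul_neg_one] at h
  exact h

lemma hasDerivAt_K0 (hx : 0 < x) : HasDerivAt K0 (-K1 x) x := by
  simpa only [K0_eq_coshMoment, K1_eq_coshMoment] using hasDerivAt_coshMoment 0 hx

lemma tendsto_cosh_atTop : Tendsto cosh atTop atTop :=
  tendsto_atTop_mono self_le_cosh tendsto_id

lemma tendsto_cosh_mul_exp_neg_mul_cosh_atTop (hx : 0 < x) :
    Tendsto (fun t ↦ cosh t * exp (-x * cosh t)) atTop (𝓝 0) := by
  simpa [Function.comp_def] using
    (tendsto_rpow_mul_exp_neg_mul_atTop_nhds_zero 1 x hx).comp tendsto_cosh_atTop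

lemma tendsto_sinh_mul_exp_neg_mul_cosh_atTop (hx : 0 < x) :
    Tendsto (fun t ↦ sinh t * exp (-x * cosh t)) atTop (𝓝 0) := by
  refine squeeze_zero' ?_ (Eventually.of_forall fun t ↦ ?_)
    (tendsto_cosh_mul_exp_neg_mul_cosh_atTop hx)
  · filter_upwards [eventually_ge_atTop 0] with t ht
    exact mul_nonneg (sinh_nonneg_iff.2 ht) (exp_pos _).le
  · exact mul_le_mul_of_nonneg_right (sinh_lt_cosh t).le (exp_pos _).le

-- Integrate the derivative of `sinh t * exp (-x * cosh t)`, which vanishes at both ends.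
lemma mul_coshMoment_two (hx : 0 < x) : x * coshMoment 2 x = x * K0 x + K1 x := by
  have hmoment (n : ℕ) := integrableOn_cosh_pow_mul_exp n hx
  have hdiff : IntegrableOn
      (fun t ↦ cosh t ^ 2 * exp (-x * cosh t) - cosh t ^ 0 * exp (-x * cosh t)) (Ioi 0) :=
    (hmoment 2).sub (hmoment 0)
  have hderiv (t : ℝ) : HasDerivAt (fun t ↦ sinh t * exp (-x * cosh t))
      (cosh t ^ 1 * exp (-x * cosh t) -
        x * (cosh t ^ 2 * exp (-x * cosh t) - cosh t ^ 0 * exp (-x * cosh t))) t := by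
    refine ((hasDerivAt_sinh t).mul ((hasDerivAt_cosh t).const_mul (-x)).exp).congr_deriv ?_
    linear_combination -(x * exp (-x * cosh t)) * sinh_sq t
  have hzero := integral_Ioi_of_hasDerivAt_of_tendsto' (a := 0) (fun t _ ↦ hderiv t)
    ((hmoment 1).sub (hdiff.const_mul x))
    (tendsto_sinh_mul_exp_neg_mul_cosh_atTop hx)
  rw [integral_sub (hmoment 1) (hdiff.const_mul x), integral_const_mul,
    integral_sub (hmoment 2) (hmoment 0), sinh_zero, zero_mul, sub_zero] at hzero
  rw [K0_eq_coshMoment, K1_eq_coshMoment]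
  simp only [coshMoment]
  linarith

lemma hasDerivAt_mul_K1 (hx : 0 < x) : HasDerivAt (fun x ↦ x * K1 x) (-(x * K0 x)) x := by
  have hK1 : HasDerivAt K1 (-coshMoment 2 x) x := by
    simpa only [K1_eq_coshMoment] using hasDerivAt_coshMoment 1 hx
  refine ((hasDerivAt_id' x).mul hK1).congr_deriv ?_
  linear_combination -mul_coshMoment_two hx

lemma integrableOn_sinh_mul_exp_neg_mul_cosh (hx : 0 < x) :
    IntegrableOn (fun t ↦ sinh t * exp (-x * cosh t)) (Ioi 0) := by
  refine (integrableOn_cosh_pow_mul_exp 1 hx).mono' (by fun_prop) ?_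
  filter_upwards [ae_restrict_mem measurableSet_Ioi] with t ht
  rw [pow_one, norm_of_nonneg (mul_nonneg (sinh_nonneg_iff.2 (le_of_lt ht)) (exp_pos _).le)]
  exact mul_le_mul_of_nonneg_right (sinh_lt_cosh t).le (exp_pos _).le

lemma mul_integral_sinh_mul_exp_neg_mul_cosh (hx : 0 < x) :
    x * ∫ t in Ioi (0 : ℝ), sinh t * exp (-x * cosh t) = exp (-x) := by
  have hderiv (t : ℝ) : HasDerivAt (fun t ↦ -exp (-x * cosh t))
      (x * (sinh t * exp (-x * cosh t))) t :=
    ((hasDerivAt_cosh t).const_mul (-x)).exp.neg.congr_deriv (by ring)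
  have hlim : Tendsto (fun t ↦ -exp (-x * cosh t)) atTop (𝓝 0) := by
    simpa using (tendsto_exp_atBot.comp
      (tendsto_cosh_atTop.const_mul_atTop_of_neg (neg_lt_zero.2 hx))).neg
  rw [← integral_const_mul, integral_Ioi_of_hasDerivAt_of_tendsto' (fun t _ ↦ hderiv t)
    ((integrableOn_sinh_mul_exp_neg_mul_cosh hx).const_mul x) hlim]
  simp

lemma exp_neg_le_mul_K1 (hx : 0 < x) : exp (-x) ≤ x * K1 x := by
  rw [← mul_integral_sinh_mul_exp_neg_mul_cosh hx, K1_eq_coshMoment]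
  gcongr
  refine integral_mono (integrableOn_sinh_mul_exp_neg_mul_cosh hx)
    (integrableOn_cosh_pow_mul_exp 1 hx) fun t ↦ ?_
  rw [pow_one]
  exact mul_le_mul_of_nonneg_right (sinh_lt_cosh t).le (exp_pos _).le

-- Since `cosh t = sinh t + exp (-t)`, the integral exceeds that of `sinh t * exp (-x * cosh t)`
-- by at most `exp (-x)`.
lemma mul_K1_le_add_one_mul_exp_neg (hx : 0 < x) : x * K1 x ≤ (x + 1) * exp (-x) := by
  have hsinh := integrableOn_sinh_mul_exp_neg_mul_cosh hx
  have hexp := (integrableOn_exp_neg_Ioi 0).mul_const (exp (-x))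
  have hle : K1 x ≤ (∫ t in Ioi (0 : ℝ), sinh t * exp (-x * cosh t)) + exp (-x) := by
    calc K1 x ≤ ∫ t in Ioi (0 : ℝ), (sinh t * exp (-x * cosh t) + exp (-t) * exp (-x)) := by
          rw [K1_eq_coshMoment]
          refine integral_mono (integrableOn_cosh_pow_mul_exp 1 hx) (hsinh.add hexp) fun t ↦ ?_
          have hdecay : exp (-x * cosh t) ≤ exp (-x) :=
            exp_le_exp.2 (by nlinarith [one_le_cosh t])
          simp only [pow_one, ← cosh_sub_sinh t]
          nlinarith [sinh_lt_cosh t]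
      _ = _ := by
          rw [integral_add hsinh hexp, integral_mul_const, integral_exp_neg_Ioi_zero, one_mul]
  linarith [mul_le_mul_of_nonneg_left hle hx.le, mul_integral_sinh_mul_exp_neg_mul_cosh hx]

lemma mul_K1_le_one (hx : 0 < x) : x * K1 x ≤ 1 :=
  calc x * K1 x ≤ (x + 1) * exp (-x) := mul_K1_le_add_one_mul_exp_neg hx
    _ ≤ exp x * exp (-x) := by gcongr; exact add_one_le_exp x
    _ = 1 := by rw [← exp_add, add_neg_cancel, exp_zero]

lemma K0_nonneg (x : ℝ) : 0 ≤ K0 x :=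
  integral_nonneg fun _ ↦ (exp_pos _).le

lemma monotoneOn_K0_add_log : MonotoneOn (fun x ↦ K0 x + log x) (Ioi 0) := by
  have hderiv : ∀ x ∈ Ioi (0 : ℝ), HasDerivAt (fun x ↦ K0 x + log x) (-K1 x + x⁻¹) x :=
    fun x hx ↦ (hasDerivAt_K0 hx).add (hasDerivAt_log (ne_of_gt hx))
  refine monotoneOn_of_hasDerivWithinAt_nonneg (convex_Ioi 0)
    (fun x hx ↦ (hderiv x hx).continuousAt.continuousWithinAt)
    (fun x hx ↦ (hderiv x (interior_subset hx)).hasDerivWithinAt) fun x hx ↦ ?_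
  have hx : 0 < x := interior_subset hx
  have hK1 : K1 x ≤ x⁻¹ := (le_inv_mul_iff₀ hx).2 (mul_K1_le_one hx) |>.trans_eq (mul_one _)
  linarith

lemma K0_le_K0_one_sub_log (hx : 0 < x) (hx1 : x ≤ 1) : K0 x ≤ K0 1 - log x := by
  have hmono : K0 x + log x ≤ K0 1 + log 1 := monotoneOn_K0_add_log hx (mem_Ioi.2 one_pos) hx1
  linarith [log_one]

end BesselFunctions

section LimitsAtZero

lemma tendsto_id_nhdsGT_zero : Tendsto (fun x : ℝ ↦ x) (𝓝[>] 0) (𝓝 0) :=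
  nhdsWithin_le_nhds

lemma tendsto_sqrt_nhdsGT_zero : Tendsto sqrt (𝓝[>] 0) (𝓝 0) :=
  (continuous_sqrt.tendsto' 0 0 sqrt_zero).mono_left nhdsWithin_le_nhds

lemma tendsto_sqrt_mul_K0 : Tendsto (fun x ↦ √x * K0 x) (𝓝[>] 0) (𝓝 0) := by
  have hlog : Tendsto (fun x ↦ √x * (K0 1 - log x)) (𝓝[>] 0) (𝓝 0) := by
    have h := (tendsto_sqrt_nhdsGT_zero.mul_const (K0 1)).sub
      (tendsto_log_mul_rpow_nhdsGT_zero one_half_pos)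
    simpa only [zero_mul, sub_zero, ← sqrt_eq_rpow, mul_sub, mul_comm (log _)] using h
  refine squeeze_zero' (Eventually.of_forall fun x ↦ mul_nonneg (sqrt_nonneg x) (K0_nonneg x))
    ?_ hlog
  filter_upwards [Ioc_mem_nhdsGT one_pos] with x hx
  gcongr
  exact K0_le_K0_one_sub_log hx.1 hx.2

lemma tendsto_mul_K0 : Tendsto (fun x ↦ x * K0 x) (𝓝[>] 0) (𝓝 0) := by
  have h := tendsto_sqrt_nhdsGT_zero.mul tendsto_sqrt_mul_K0
  rw [zero_mul] at h
  refine h.congr' ?_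
  filter_upwards [self_mem_nhdsWithin] with x hx
  rw [← mul_assoc, mul_self_sqrt (le_of_lt hx)]

lemma tendsto_mul_K1 : Tendsto (fun x ↦ x * K1 x) (𝓝[>] 0) (𝓝 1) := by
  have hexp : Tendsto (fun x : ℝ ↦ exp (-x)) (𝓝[>] 0) (𝓝 1) :=
    (Continuous.tendsto' (by fun_prop) 0 1 (by simp)).mono_left nhdsWithin_le_nhds
  refine tendsto_of_tendsto_of_tendsto_of_le_of_le' hexp tendsto_const_nhds ?_ ?_
  · filter_upwards [self_mem_nhdsWithin] with x hx using exp_neg_le_mul_K1 hx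
  · filter_upwards [self_mem_nhdsWithin] with x hx using mul_K1_le_one hx

lemma tendsto_one_sub_mul_K1_div_self :
    Tendsto (fun x ↦ (1 - x * K1 x) / x) (𝓝[>] 0) (𝓝 0) := by
  refine HasDerivAt.lhopital_zero_nhdsGT (f' := fun x ↦ x * K0 x) (g' := fun _ ↦ 1) ?_
    (Eventually.of_forall hasDerivAt_id') (Eventually.of_forall fun _ ↦ one_ne_zero) ?_
    tendsto_id_nhdsGT_zero ?_
  · filter_upwards [self_mem_nhdsWithin] with x hx
    simpa using (hasDerivAt_mul_K1 hx).const_sub 1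
  · simpa using tendsto_mul_K1.const_sub 1
  · simpa using tendsto_mul_K0

/-- The error term `e(x)` in the expansion `K₁(x) = 1/x - (x/2) K₀(x) - x/4 + x² e(x)`. -/
noncomputable def K1Remainder (x : ℝ) : ℝ :=
  (x * K1 x - 1 + x ^ 2 * K0 x / 2 + x ^ 2 / 4) / x ^ 3

lemma K1_eq_add_K1Remainder {x : ℝ} (hx : x ≠ 0) :
    K1 x = 1 / x - x / 2 * K0 x - x / 4 + x ^ 2 * K1Remainder x := by
  rw [K1Remainder]
  field_simp
  ring

lemma tendsto_K1Remainder : Tendsto K1Remainder (𝓝[>] 0) (𝓝 0) := by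
  have hx0 := tendsto_id_nhdsGT_zero
  refine HasDerivAt.lhopital_zero_nhdsGT (f' := fun x ↦ x / 2 * (1 - x * K1 x))
    (g' := fun x ↦ 3 * x ^ 2) ?_ (Eventually.of_forall fun x ↦ by simpa using hasDerivAt_pow 3 x)
    ?_ ?_ (by simpa using hx0.pow 3) ?_
  · filter_upwards [self_mem_nhdsWithin] with x hx
    have h := (((hasDerivAt_mul_K1 hx).sub_const 1).add
      (((hasDerivAt_pow 2 x).mul (hasDerivAt_K0 hx)).div_const 2)).add
      ((hasDerivAt_pow 2 x).div_const 4)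
    refine h.congr_deriv ?_
    push_cast
    ring
  · filter_upwards [self_mem_nhdsWithin] with x hx
    have hx : 0 < x := hx
    positivity
  · have h := ((tendsto_mul_K1.sub_const 1).add ((hx0.mul tendsto_mul_K0).div_const 2)).add
      ((hx0.pow 2).div_const 4)
    simpa [pow_two, mul_assoc] using h
  · have h := tendsto_one_sub_mul_K1_div_self.div_const 6
    rw [zero_div] at h
    refine h.congr' ?_
    filter_upwards [self_mem_nhdsWithin] with x hx
    have hx : x ≠ 0 := ne_of_gt hx
    field_simp
    ring

end LimitsAtZero

section QuadraticForm

/-- The quadratic form `∑ rⁱʲ(z) kᵢ kⱼ` of which `fPdiag` is a multiple, with `k₀` and `k₁`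
independent variables, so that asymptotic expansions can be substituted for them. -/
noncomputable def besselForm (z k₀ k₁ : ℝ) : ℝ :=
  r00 z * k₀ * k₀ + r01 z * k₀ * k₁ + r01 z * k₁ * k₀ + r11 z * k₁ * k₁

/-- What is left of `besselForm z (K0 (2 * z)) (K1 (2 * z))` once its polar part is removed, in
terms of `s = √z`, `α = √z K₀(2z)` and `e = K1Remainder (2 * z)`. The auxiliary quantities are
determined by `z K₁(2z) = u = 1/2 - s³ β`. -/
noncomputable def regularPart (s α e : ℝ) : ℝ :=
  let β := α + s / 2 - 4 * s ^ 3 * e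
  let u := 1 / 2 - s ^ 3 * β
  α ^ 2 * (-512 * s ^ 8 + 48 * s ^ 4 - 15) + 30 * α * β - (256 * s ^ 4 + 24) * (s * α * u) +
    (512 * s ^ 6 + 16 * s ^ 2) * u ^ 2 - 33 * s * β + (33 * s ^ 4 - 15) * β ^ 2 - 60 * e

lemma besselForm_sq {s : ℝ} (hs : s ≠ 0) (k₀ e : ℝ) :
    besselForm (s ^ 2) k₀ (1 / (2 * s ^ 2) - s ^ 2 * k₀ - s ^ 2 / 2 + 4 * s ^ 4 * e) +
      (15 / (4 * s ^ 6) - 63 / (4 * s ^ 2)) = regularPart s (s * k₀) e := by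
  simp only [besselForm, r00, r01, r11, regularPart]
  field_simp
  ring

lemma tendsto_regularPart :
    Tendsto (fun p : ℝ × ℝ × ℝ ↦ regularPart p.1 p.2.1 p.2.2) (𝓝 (0, 0, 0)) (𝓝 0) := by
  refine Continuous.tendsto' ?_ _ _ (by simp [regularPart])
  unfold regularPart
  fun_prop

lemma besselForm_K0_K1_add_eq_regularPart {z : ℝ} (hz : 0 < z) :
    besselForm z (K0 (2 * z)) (K1 (2 * z)) + (15 / (4 * z ^ 3) - 63 / (4 * z)) =
      regularPart √z (√z * K0 (2 * z)) (K1Remainder (2 * z)) := by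
  rw [← besselForm_sq (sqrt_pos.2 hz).ne', K1_eq_add_K1Remainder (by positivity)]
  have hs : √z ^ 2 = z := sq_sqrt hz.le
  rw [show √z ^ 6 = (√z ^ 2) ^ 3 by ring, show √z ^ 4 = (√z ^ 2) ^ 2 by ring, hs]
  congr 2
  ring

lemma tendsto_besselForm_K0_K1_add :
    Tendsto (fun z ↦ besselForm z (K0 (2 * z)) (K1 (2 * z)) + (15 / (4 * z ^ 3) - 63 / (4 * z)))
      (𝓝[>] 0) (𝓝 0) := by
  have hdouble : Tendsto (fun z : ℝ ↦ 2 * z) (𝓝[>] 0) (𝓝[>] 0) :=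
    tendsto_iff_comap.2 (comap_mulLeft_nhdsGT_zero two_pos).ge
  have hK0 : Tendsto (fun z ↦ √z * K0 (2 * z)) (𝓝[>] 0) (𝓝 0) := by
    have h := (tendsto_sqrt_mul_K0.comp hdouble).div_const √2
    simpa [Function.comp_def, mul_assoc, mul_div_cancel_left₀] using h
  have hlim := tendsto_regularPart.comp (tendsto_sqrt_nhdsGT_zero.prodMk_nhds
    (hK0.prodMk_nhds (tendsto_K1Remainder.comp hdouble)))
  refine hlim.congr' ?_
  filter_upwards [self_mem_nhdsWithin] with z hz
    using (besselForm_K0_K1_add_eq_regularPart hz).symm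

end QuadraticForm

lemma fPdiag_add_sub_eq_mul_besselForm_add {n₁ : ℤ} (h₁ : n₁ ≠ 0) {y : ℝ} (hy : y ≠ 0) :
    fPdiag n₁ y + 8 * (sigma2 n₁.natAbs : ℝ) ^ 2 / (21 * (n₁ : ℝ) ^ 6 * π ^ 2 * y ^ 3) -
        8 * (sigma2 n₁.natAbs : ℝ) ^ 2 / (5 * (n₁ : ℝ) ^ 4 * y) =
      32 * π * (sigma2 n₁.natAbs : ℝ) ^ 2 / (315 * |(n₁ : ℝ)| ^ 3) *
        (besselForm (π * |(n₁ : ℝ)| * y) (K0 (2 * (π * |(n₁ : ℝ)| * y)))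
            (K1 (2 * (π * |(n₁ : ℝ)| * y))) +
          (15 / (4 * (π * |(n₁ : ℝ)| * y) ^ 3) - 63 / (4 * (π * |(n₁ : ℝ)| * y)))) := by
  have hN : |(n₁ : ℝ)| ≠ 0 := abs_ne_zero.2 (Int.cast_ne_zero.2 h₁)
  rw [← Even.pow_abs (by decide : Even 6) (n₁ : ℝ), ← Even.pow_abs (by decide : Even 4) (n₁ : ℝ),
    mul_add, add_sub_assoc]
  congr 1
  · simp only [fPdiag, besselForm, mul_assoc]
  · field_simp
    ring

theorem mode_diag_small_y_general (n₁ : ℤ) (h₁ : n₁ ≠ 0) :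
    Tendsto (fun y ↦
      fPdiag n₁ y + 8 * (sigma2 n₁.natAbs : ℝ) ^ 2 / (21 * (n₁ : ℝ) ^ 6 * π ^ 2 * y ^ 3) -
        8 * (sigma2 n₁.natAbs : ℝ) ^ 2 / (5 * (n₁ : ℝ) ^ 4 * y)) (𝓝[>] 0) (𝓝 0) := by
  have hscale : Tendsto (fun y ↦ π * |(n₁ : ℝ)| * y) (𝓝[>] 0) (𝓝[>] 0) :=
    tendsto_iff_comap.2 (comap_mulLeft_nhdsGT_zero (by positivity)).ge
  have hlim := (tendsto_besselForm_K0_K1_add.comp hscale).const_mul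
    (32 * π * (sigma2 n₁.natAbs : ℝ) ^ 2 / (315 * |(n₁ : ℝ)| ^ 3))
  rw [mul_zero] at hlim
  refine hlim.congr' ?_
  filter_upwards [self_mem_nhdsWithin] with y hy
    using (fPdiag_add_sub_eq_mul_besselForm_add h₁ (ne_of_gt hy)).symm

/-- small-`y` behaviour of `f̂^P_{n₁,-n₁}`:
`f(y) + 8σ₂(|n₁|)²/(21 n₁⁶ π² y³) − 8σ₂(|n₁|)²/(5 n₁⁴ y)` stays bounded as `y → 0⁺`. -/
theorem mode_diag_small_y (n₁ : ℤ) (h₁ : n₁ ≠ 0) :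
    ∃ C : ℝ, ∀ᶠ y in nhdsWithin (0 : ℝ) (Set.Ioi 0),
      |fPdiag n₁ y + 8 * (sigma2 n₁.natAbs : ℝ) ^ 2 / (21 * (n₁ : ℝ) ^ 6 * π ^ 2 * y ^ 3) -
          8 * (sigma2 n₁.natAbs : ℝ) ^ 2 / (5 * (n₁ : ℝ) ^ 4 * y)| ≤ C := by
  simpa only [IsBoundedUnder, IsBounded, eventually_map] using
    (mode_diag_small_y_general n₁ h₁).abs.isBoundedUnder_le
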